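/- If in addition Σ_k γ_k ω(d_C γ_k) < ∞, then the sweeping gradient errors e_{k+1} := ∇f(x_{k+1}) − ĝ_{k+1} satisfy Σ_k γ_{k+1} ‖e_{k+1}‖ < ∞. -/

import Mathlib

/-!
For `k ≥ n` the estimate `ĝ_k` is the average of `∇f_{[j]}(x_j)` over the last `n` indices
`j = k-n+1, …, k` (`sweeping_estimate_eq`), and these indices hit every residue class exactly once
(`sum_window_sweepIdx`), so `∇f(x_k)` is the average of `∇f_{[j]}(x_k)` over the same window. Since `ω` need not be subadditive, each difference
`∇f_{[j]}(x_k) - ∇f_{[j]}(x_j)` is telescoped along the iterates *before* smoothness is applied,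
which bounds it by the sum of `ω(d_C γ_m)` over the window. As `γ` is nonincreasing,
`γ_k ‖e_k‖` is then at most the sum of `γ_m ω(d_C γ_m)` over the window, a finite sum of shifts of
the summable sequence.
-/

open Filter

/-- The index `[k] ∈ {1,…,n}` congruent to `k` modulo `n`
(with `[k] = n` when `n ∣ k`). -/
def sweepIdx (n k : ℕ) : ℕ := if k % n = 0 then n else k % n

theorem sweepIdx_mem_Icc {n : ℕ} (hn : 0 < n) (k : ℕ) : sweepIdx n k ∈ Finset.Icc 1 n := by
  have := Nat.mod_lt k hn
  unfold sweepIdx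
  split_ifs <;> simp only [Finset.mem_Icc] <;> omega

theorem sweepIdx_add_self (n k : ℕ) : sweepIdx n (k + n) = sweepIdx n k := by
  simp [sweepIdx]

theorem sweepIdx_of_le {n k : ℕ} (h1 : 1 ≤ k) (hk : k ≤ n) : sweepIdx n k = k := by
  unfold sweepIdx
  rcases hk.eq_or_lt with rfl | h
  · simp
  · rw [Nat.mod_eq_of_lt h, if_neg (by omega)]

theorem sum_Icc_one_eq_sum_range {M : Type*} [AddCommMonoid M] (n : ℕ) (F : ℕ → M) :
    ∑ i ∈ Finset.Icc 1 n, F i = ∑ j ∈ Finset.range n, F (j + 1) := by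
  rw [Finset.range_eq_Ico, Finset.sum_Ico_add' F 0 n 1, Nat.zero_add]
  rfl

/-- Moving a window of length `n` one step to the right exchanges its first term for the next. -/
theorem sum_window_succ {M : Type*} [AddCommGroup M] (n k : ℕ) (F : ℕ → M) :
    ∑ j ∈ Finset.range n, F (j + 1 + (k + 1))
      = ∑ j ∈ Finset.range n, F (j + 1 + k) + (F (k + 1 + n) - F (k + 1)) := by
  have h1 := Finset.sum_range_succ (fun j => F (j + 1 + k)) n
  have h2 := Finset.sum_range_succ' (fun j => F (j + 1 + k)) n
  have e : ∀ j, F (j + 1 + 1 + k) = F (j + 1 + (k + 1)) := fun j => by congr 1; omega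
  simp only [e] at h2
  rw [show n + 1 + k = k + 1 + n by omega] at h1
  rw [show 0 + 1 + k = k + 1 by omega] at h2
  rw [add_sub, ← h1, h2, add_sub_cancel_right]

/-- Any `n` consecutive indices run through `{1,…,n}` under `[·]`. -/
theorem sum_window_sweepIdx {M : Type*} [AddCommGroup M] (n k : ℕ) (F : ℕ → M) :
    ∑ j ∈ Finset.range n, F (sweepIdx n (j + 1 + k)) = ∑ i ∈ Finset.Icc 1 n, F i := by
  induction k with
  | zero =>
    rw [sum_Icc_one_eq_sum_range]
    refine Finset.sum_congr rfl fun j hj => ?_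
    have := Finset.mem_range.1 hj
    rw [sweepIdx_of_le (by omega) (by omega), Nat.add_zero]
  | succ k ih =>
    rw [sum_window_succ n k (fun m => F (sweepIdx n m)), ih, sweepIdx_add_self, sub_self, add_zero]

theorem gradient_average_eq {H : Type*} [NormedAddCommGroup H] [InnerProductSpace ℝ H]
    [CompleteSpace H] {n : ℕ} {f : ℕ → H → ℝ} {f' : ℕ → H → H} {y g : H}
    (hgrad : ∀ i ∈ Finset.Icc 1 n, HasGradientAt (f i) (f' i y) y)
    (hg : HasGradientAt (fun v => (n : ℝ)⁻¹ * ∑ i ∈ Finset.Icc 1 n, f i v) g y) :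
    g = (n : ℝ)⁻¹ • ∑ i ∈ Finset.Icc 1 n, f' i y := by
  refine hg.unique ?_
  rw [hasGradientAt_iff_hasFDerivAt]
  have h := (HasFDerivAt.fun_sum fun i hi => (hgrad i hi).hasFDerivAt).const_mul (n : ℝ)⁻¹
  simpa using h

/-- For `k ≥ n` (shifted by `n` here) the sweeping estimate is the average of the gradients computed
during the last `n` steps. -/
theorem sweeping_estimate_eq {H : Type*} [NormedAddCommGroup H] [InnerProductSpace ℝ H]
    {n : ℕ} (hn : 0 < n) {f' : ℕ → H → H} {x ghat : ℕ → H}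
    (hg_low : ∀ k, 1 ≤ k → k ≤ n →
      ghat k = (n : ℝ)⁻¹ • ∑ i ∈ Finset.Icc 1 k, f' i (x i))
    (hg_rec : ∀ k, n + 1 ≤ k →
      ghat k = ghat (k-1)
        + (n : ℝ)⁻¹ • (f' (sweepIdx n k) (x k) - f' (sweepIdx n k) (x (k-n))))
    (k : ℕ) :
    ghat (k + n) = (n : ℝ)⁻¹ •
      ∑ j ∈ Finset.range n, f' (sweepIdx n (j + 1 + k)) (x (j + 1 + k)) := by
  induction k with
  | zero =>
    rw [Nat.zero_add, hg_low n hn le_rfl, sum_Icc_one_eq_sum_range]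
    congr 1
    refine Finset.sum_congr rfl fun j hj => ?_
    have := Finset.mem_range.1 hj
    rw [Nat.add_zero, sweepIdx_of_le (by omega) (by omega)]
  | succ k ih =>
    rw [hg_rec _ (by omega), show k + 1 + n - 1 = k + n by omega, Nat.add_sub_cancel, ih,
      sum_window_succ n k (fun m => f' (sweepIdx n m) (x m)), smul_add, sweepIdx_add_self]

/-- Proposition 6.2 of the paper: if `Σ_k γ k ω(d_C γ k) < ∞`,
the sweeping gradient errors `e_{k+1} = ∇f(x_{k+1}) − ĝ_{k+1}` satisfy
`Σ_k γ (k+1) ‖e (k+1)‖ < ∞`. -/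
theorem sweeping_gradient_error_summability
    {H : Type*} [NormedAddCommGroup H] [InnerProductSpace ℝ H] [CompleteSpace H]
    (n : ℕ) (hn : 1 < n)
    (f : ℕ → H → ℝ) (f' : ℕ → H → H)
    (hgrad : ∀ i ∈ Finset.Icc 1 n, ∀ x : H, HasGradientAt (f i) (f' i x) x)
    (w : ℝ → ℝ) (hwmono : ∀ s t : ℝ, 0 ≤ s → s ≤ t → w s ≤ w t)
    (hsmooth : ∀ i ∈ Finset.Icc 1 n, ∀ x y : H, ‖f' i x - f' i y‖ ≤ w ‖x - y‖)
    -- the gradient of f = (1/n) Σ f_i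
    (gradf : H → H)
    (hgradf : ∀ y : H,
      HasGradientAt (fun v => (n : ℝ)⁻¹ * ∑ i ∈ Finset.Icc 1 n, f i v) (gradf y) y)
    -- step sizes and iterates
    (γ : ℕ → ℝ) (hγpos : ∀ k, 0 < γ k) (hγanti : Antitone γ)
    (x shat : ℕ → H) (dC : ℝ) (hdCpos : 0 < dC)
    (hrec : ∀ k, x (k+1) = x k + γ k • (shat k - x k))
    (hstep : ∀ k, ‖shat k - x k‖ ≤ dC)
    -- the sweeping gradient estimates
    (ghat : ℕ → H)
    (hg_low : ∀ k, 1 ≤ k → k ≤ n →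
      ghat k = (n : ℝ)⁻¹ • ∑ i ∈ Finset.Icc 1 k, f' i (x i))
    (hg_rec : ∀ k, n + 1 ≤ k →
      ghat k = ghat (k-1)
        + (n : ℝ)⁻¹ • (f' (sweepIdx n k) (x k) - f' (sweepIdx n k) (x (k-n))))
    -- summability assumption
    (hsum : Summable (fun k => γ k * w (dC * γ k))) :
    Summable (fun k => γ (k+1) * ‖gradf (x (k+1)) - ghat (k+1)‖) := by
  have hn0 : 0 < n := by omega
  have hnR : (0 : ℝ) < n := by exact_mod_cast hn0
  have hw0 : 0 ≤ w 0 := by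
    simpa using hsmooth 1 (Finset.mem_Icc.2 ⟨le_rfl, hn0⟩) (x 0) (x 0)
  have hw : ∀ m, 0 ≤ w (dC * γ m) := fun m =>
    hw0.trans (hwmono 0 _ le_rfl (mul_pos hdCpos (hγpos m)).le)
  have hone : ∀ i ∈ Finset.Icc 1 n, ∀ m, dist (f' i (x m)) (f' i (x (m + 1))) ≤ w (dC * γ m) := by
    intro i hi m
    rw [dist_comm, dist_eq_norm]
    refine (hsmooth i hi _ _).trans (hwmono _ _ (norm_nonneg _) ?_)
    rw [hrec m, add_sub_cancel_left, norm_smul, Real.norm_of_nonneg (hγpos m).le, mul_comm]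
    exact mul_le_mul_of_nonneg_right (hstep m) (hγpos m).le
  have hdiff : ∀ i ∈ Finset.Icc 1 n, ∀ k, ∀ j ∈ Finset.range n,
      ‖f' i (x (k + n)) - f' i (x (j + 1 + k))‖
        ≤ ∑ m ∈ Finset.range n, w (dC * γ (m + (k + 1))) := by
    intro i hi k j hj
    have hj' := Finset.mem_range.1 hj
    rw [← dist_eq_norm, dist_comm]
    refine (dist_le_Ico_sum_of_dist_le (f := fun m => f' i (x m)) (d := fun m => w (dC * γ m))
      (by omega) fun {m} _ _ => hone i hi m).trans ?_
    rw [Finset.range_eq_Ico, Finset.sum_Ico_add' (fun m => w (dC * γ m)) 0 n (k + 1)]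
    refine Finset.sum_le_sum_of_subset_of_nonneg (Finset.Ico_subset_Ico (by omega) (by omega))
      fun m _ _ => hw m
  have herr : ∀ k, ‖gradf (x (k + n)) - ghat (k + n)‖
      ≤ ∑ m ∈ Finset.range n, w (dC * γ (m + (k + 1))) := by
    intro k
    rw [gradient_average_eq (fun i hi => hgrad i hi _) (hgradf _),
      sweeping_estimate_eq hn0 hg_low hg_rec k,
      ← sum_window_sweepIdx n k (fun i => f' i (x (k + n))), ← smul_sub, ← Finset.sum_sub_distrib,
      norm_smul, norm_inv, Real.norm_natCast, inv_mul_le_iff₀ hnR]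
    refine (norm_sum_le_of_le _ fun j hj =>
      hdiff _ (sweepIdx_mem_Icc hn0 _) k j hj).trans ?_
    simp
  have hshift : Summable fun k => γ (k + n) * ‖gradf (x (k + n)) - ghat (k + n)‖ := by
    refine Summable.of_nonneg_of_le (fun k => mul_nonneg (hγpos _).le (norm_nonneg _))
      (fun k => ?_) (summable_sum (s := Finset.range n) fun m _ =>
        (summable_nat_add_iff (m + 1)).2 hsum)
    refine (mul_le_mul_of_nonneg_left (herr k) (hγpos _).le).trans ?_
    rw [Finset.mul_sum]
    refine Finset.sum_le_sum fun m hm => ?_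
    have := Finset.mem_range.1 hm
    rw [show m + (k + 1) = k + (m + 1) by omega]
    exact mul_le_mul_of_nonneg_right (hγanti (by omega)) (hw _)
  exact (summable_nat_add_iff 1).2
    ((summable_nat_add_iff (f := fun k => γ k * ‖gradf (x k) - ghat k‖) n).1 hshift)
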